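/- arXiv:2006.04111 — 2 statements merged into one kernel-verified Lean document; each statement's English description precedes it below -/
import Mathlib

section
/- For every real number γ with 0 < γ ≤ 2, the fractional centered difference coefficients satisfy: ω_0^{(γ)} = Γ(γ+1)/Γ(γ/2+1)^2 ≥ 0, and for every integer k with |k| ≥ 1 one has ω_{-k}^{(γ)} = ω_k^{(γ)} and ω_k^{(γ)} ≤ 0. -/
/-!
With `a = γ / 2 ∈ (0, 1]` the only factor of `fracCenteredCoeff γ k` whose sign is in doubt for
`k ≥ 1` is `Γ(a - (k - 1))`. Iterating `Γ(s + 1) = s Γ(s)` downwards from `Γ(a) > 0` multiplies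
by one negative number per step, so this factor has sign `(-1) ^ (k - 1)` or vanishes
(`neg_one_pow_mul_Gamma_sub_nonneg`). Combined with `(-1) ^ k` this gives a nonpositive
coefficient; negative `k` follow from the symmetry `fracCenteredCoeff_neg`.
-/

open Real

/-- Fractional centered difference coefficients
`ω_k^{(γ)} = (−1)^k Γ(γ+1) / (Γ(γ/2 − k + 1) Γ(γ/2 + k + 1))`,
with the convention that division by zero gives zero (automatic since
`Real.Gamma` vanishes at nonpositive integers). -/
noncomputable def fracCenteredCoeff (γ : ℝ) (k : ℤ) : ℝ :=
  (-1 : ℝ) ^ k * Real.Gamma (γ + 1) /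
    (Real.Gamma (γ / 2 - k + 1) * Real.Gamma (γ / 2 + k + 1))

theorem fracCenteredCoeff_neg (γ : ℝ) (k : ℤ) :
    fracCenteredCoeff γ (-k) = fracCenteredCoeff γ k := by
  have h : (-1 : ℝ) ^ (-k) = (-1 : ℝ) ^ k := by
    rw [zpow_neg, ← inv_zpow, inv_neg, inv_one]
  unfold fracCenteredCoeff
  rw [h]
  push_cast
  rw [sub_neg_eq_add, ← sub_eq_add_neg, mul_comm (Real.Gamma (γ / 2 + k + 1))]

/-- The sign of the Gamma function at successive downward integer shifts of a point of `(0, 1]`;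
at `a = 1` the arguments with `n ≥ 1` are poles, where `Real.Gamma` is `0`. -/
theorem neg_one_pow_mul_Gamma_sub_nonneg {a : ℝ} (ha0 : 0 < a) (ha1 : a ≤ 1) (n : ℕ) :
    0 ≤ (-1 : ℝ) ^ n * Real.Gamma (a - n) := by
  induction n with
  | zero => simpa using (Real.Gamma_pos_of_pos ha0).le
  | succ n ih =>
    have hn : (0 : ℝ) ≤ n := n.cast_nonneg
    push_cast
    rcases eq_or_ne (a - (n + 1)) 0 with h0 | h0
    · rw [h0, Real.Gamma_zero, mul_zero]
    · have hpos : 0 < -(a - (n + 1)) :=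
        neg_pos.mpr (lt_of_le_of_ne (by linarith) h0)
      have hrec := Real.Gamma_add_one h0
      rw [show a - ((n : ℝ) + 1) + 1 = a - n by ring] at hrec
      rw [hrec] at ih
      refine (mul_nonneg_iff_of_pos_left hpos).mp ?_
      calc (0 : ℝ) ≤ _ := ih
        _ = _ := by ring

theorem fracCenteredCoeff_succ_nonpos {γ : ℝ} (hγ0 : 0 < γ) (hγ2 : γ ≤ 2) (n : ℕ) :
    fracCenteredCoeff γ ((n + 1 : ℕ) : ℤ) ≤ 0 := by
  have hsign := neg_one_pow_mul_Gamma_sub_nonneg (a := γ / 2) (by linarith) (by linarith) n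
  have hnum : 0 ≤ Real.Gamma (γ + 1) := Real.Gamma_nonneg_of_nonneg (by linarith)
  have hden : 0 ≤ Real.Gamma (γ / 2 + (n + 1) + 1) :=
    Real.Gamma_nonneg_of_nonneg (by positivity)
  have hinv : ((-1 : ℝ) ^ n)⁻¹ = (-1) ^ n := by
    rw [← inv_pow, inv_neg, inv_one]
  have key : fracCenteredCoeff γ ((n + 1 : ℕ) : ℤ) =
      -(((-1 : ℝ) ^ n * Real.Gamma (γ / 2 - n))⁻¹ *
        (Real.Gamma (γ + 1) / Real.Gamma (γ / 2 + (n + 1) + 1))) := by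
    unfold fracCenteredCoeff
    rw [zpow_natCast, mul_inv, hinv]
    push_cast
    rw [show γ / 2 - ((n : ℝ) + 1) + 1 = γ / 2 - n by ring, div_eq_mul_inv, mul_inv]
    ring
  rw [key, neg_nonpos]
  positivity

theorem stmt_0 (γ : ℝ) (hγ0 : 0 < γ) (hγ2 : γ ≤ 2) :
    fracCenteredCoeff γ 0 = Real.Gamma (γ + 1) / (Real.Gamma (γ / 2 + 1)) ^ 2 ∧
    0 ≤ fracCenteredCoeff γ 0 ∧
    ∀ k : ℤ, 1 ≤ |k| →
      fracCenteredCoeff γ (-k) = fracCenteredCoeff γ k ∧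
      fracCenteredCoeff γ k ≤ 0 := by
  have h0 : fracCenteredCoeff γ 0 = Real.Gamma (γ + 1) / (Real.Gamma (γ / 2 + 1)) ^ 2 := by
    simp [fracCenteredCoeff, sq]
  refine ⟨h0, ?_, fun k hk => ⟨fracCenteredCoeff_neg γ k, ?_⟩⟩
  · rw [h0]
    exact div_nonneg (Real.Gamma_nonneg_of_nonneg (by linarith)) (sq_nonneg _)
  · obtain ⟨m, rfl | rfl⟩ := k.eq_nat_or_neg
    all_goals
      obtain ⟨n, rfl⟩ : ∃ n, m = n + 1 := Nat.exists_eq_succ_of_ne_zero (by rintro rfl; simp at hk)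
    · exact fracCenteredCoeff_succ_nonpos hγ0 hγ2 n
    · rw [fracCenteredCoeff_neg]
      exact fracCenteredCoeff_succ_nonpos hγ0 hγ2 n
end

section
/- Let γ be a real number with 0 < γ < 2 and γ ≠ 1, let C₀ > 0, and let g : ℝ → ℂ be a measurable function satisfying |g(ξ)| ≤ C₀ (1 + |ξ|)^{−7} for all ξ ∈ ℝ. Then there exists a constant C′ > 0 such that for every h with 0 < h ≤ 1 the function ξ ↦ ( −|ξ|^γ + ((1 + γ/12) − (γ/12) cos(ξ h)) · h^{−γ} |2 sin(ξ h/2)|^γ ) · g(ξ) is integrable on ℝ and ∫_{−∞}^{∞} | ( −|ξ|^γ + ((1 + γ/12) − (γ/12) cos(ξ h)) · h^{−γ} |2 sin(ξ h/2)|^γ ) g(ξ) | dξ ≤ C′ h⁴. -/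
open Real MeasureTheory

/-!
Put `y = |ξ| h / 2`. Since `1 - cos (2 y) = 2 sin² y` and `2 sin y / h = |ξ| sin y / y`, the symbol
error equals `|ξ|^γ ((1 + γ/6 sin² y) |sin y / y|^γ - 1)`. For small `y` one has
`|sin y / y|^γ = 1 - γ y² / 6 + O(y⁴)`, and the factor `1 + γ/6 sin² y` cancels the quadratic term,
so the bracket is `O(y⁴)` (`cancel_quadratic`, `sinc_bound`); for `y ≥ 1` the bracket is
merely bounded, which is also `O(y⁴)` (`sinc_bound_all`). Hence the error is at most `(1 + |ξ|)^(γ + 4) h⁴` for every `ξ`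
(`symbol_bound`). Against the decay `(1 + |ξ|)^(-7)` of `g` this leaves `(1 + |ξ|)^(γ - 3)`, which
is integrable because `γ < 2`.
-/

/-- Second-order expansion of `t ↦ (1 - t)^γ` at `0`, through `exp (γ log (1 - t))`. -/
lemma one_sub_rpow_bound {γ t : ℝ} (hγ0 : 0 < γ) (hγ2 : γ < 2) (h0 : 0 ≤ t) (h1 : t ≤ 1 / 4) :
    |(1 - t) ^ γ - (1 - γ * t)| ≤ 10 * t ^ 2 := by
  have hlog := abs_log_sub_add_sum_range_le (x := t) (by rw [abs_of_nonneg h0]; linarith) 1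
  rw [abs_of_nonneg h0] at hlog
  simp at hlog
  have h2 : t ^ 2 / (1 - t) ≤ 4 / 3 * t ^ 2 := by
    rw [div_le_iff₀ (by linarith)]
    nlinarith [sq_nonneg t]
  obtain ⟨hl1, hl2⟩ := abs_le.1 (hlog.trans h2)
  have hL : |log (1 - t)| ≤ 4 / 3 * t := by
    rw [abs_le]
    constructor <;> nlinarith
  have hu : |γ * log (1 - t)| ≤ 8 / 3 * t := by
    rw [abs_mul, abs_of_pos hγ0]
    nlinarith [abs_nonneg (log (1 - t))]
  have he := abs_exp_sub_one_sub_id_le (x := γ * log (1 - t)) (by linarith)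
  have hu2 : (γ * log (1 - t)) ^ 2 ≤ (8 / 3 * t) ^ 2 := by
    rw [← sq_abs]
    exact pow_le_pow_left₀ (abs_nonneg _) hu 2
  rw [rpow_def_of_pos (by linarith), mul_comm (log _)]
  obtain ⟨he1, he2⟩ := abs_le.1 he
  rw [abs_le]
  constructor <;> nlinarith [sq_nonneg t]

/-- Cancellation of the quadratic terms, with `t` in the role of `1 - sin y / y` and `R` in the role
of the second-order remainder of `(1 - t)^γ`. -/
lemma cancel_quadratic {γ y t R : ℝ} (hγ0 : 0 < γ) (hγ2 : γ < 2) (hy2 : y ^ 2 ≤ 1)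
    (ht0 : 0 ≤ t) (ht1 : t ≤ y ^ 2 / 4) (hty : |y ^ 2 / 6 - t| ≤ y ^ 4)
    (hR' : |R| ≤ 5 / 8 * y ^ 4) :
    |(1 + γ / 6 * (y * (1 - t)) ^ 2) * (1 - γ * t + R) - 1| ≤ 10 * y ^ 4 := by
  have hw : (1 - t) ^ 2 ≤ 1 := by nlinarith
  -- Error terms: the mismatch between `y² / 6` and `t`, the gap `y² - sin² y = y² (2 t - t²)`,
  -- the remainder `R`, and the product of the two corrections.
  have e1 : |γ * (y ^ 2 / 6 - t)| ≤ 2 * y ^ 4 := by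
    rw [abs_mul, abs_of_pos hγ0]
    nlinarith [abs_nonneg (y ^ 2 / 6 - t)]
  have e2 : |γ / 6 * (y ^ 2 * (2 * t - t ^ 2))| ≤ y ^ 4 := by
    have a0 : 0 ≤ 2 * t - t ^ 2 := by nlinarith
    have a1 : 2 * t - t ^ 2 ≤ y ^ 2 / 2 := by nlinarith
    have a2 : y ^ 2 * (2 * t - t ^ 2) ≤ y ^ 2 * (y ^ 2 / 2) := by gcongr
    have a3 : 0 ≤ y ^ 2 * (2 * t - t ^ 2) := by positivity
    rw [abs_of_nonneg (by positivity)]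
    nlinarith
  have e3 : |γ / 6 * (y * (1 - t)) ^ 2 * (-(γ * t) + R)| ≤ 2 * y ^ 4 := by
    have b1 : |-(γ * t) + R| ≤ 2 * y ^ 2 := by
      have hy4 : y ^ 4 ≤ y ^ 2 := by nlinarith [sq_nonneg y]
      obtain ⟨c1, c2⟩ := abs_le.1 hR'
      rw [abs_le]
      constructor <;> nlinarith
    have b2 : γ / 6 * (y * (1 - t)) ^ 2 ≤ y ^ 2 := by
      rw [mul_pow]
      have : y ^ 2 * (1 - t) ^ 2 ≤ y ^ 2 := by nlinarith [sq_nonneg y]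
      have : 0 ≤ y ^ 2 * (1 - t) ^ 2 := by positivity
      nlinarith
    rw [abs_mul, abs_of_nonneg (by positivity)]
    calc _ ≤ y ^ 2 * (2 * y ^ 2) := by gcongr
      _ = _ := by ring
  have hsplit : (1 + γ / 6 * (y * (1 - t)) ^ 2) * (1 - γ * t + R) - 1 =
      γ * (y ^ 2 / 6 - t) - γ / 6 * (y ^ 2 * (2 * t - t ^ 2)) + R
        + γ / 6 * (y * (1 - t)) ^ 2 * (-(γ * t) + R) := by ring
  rw [hsplit]
  obtain ⟨_, _⟩ := abs_le.1 e1
  obtain ⟨_, _⟩ := abs_le.1 e2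
  obtain ⟨_, _⟩ := abs_le.1 e3
  obtain ⟨_, _⟩ := abs_le.1 hR'
  have : 0 ≤ y ^ 4 := by positivity
  rw [abs_le]
  constructor <;> linarith

lemma sinc_bound {γ y : ℝ} (hγ0 : 0 < γ) (hγ2 : γ < 2) (h0 : 0 < y) (h1 : y ≤ 1) :
    |(1 + γ / 6 * sin y ^ 2) * |sin y / y| ^ γ - 1| ≤ 10 * y ^ 4 := by
  obtain ⟨t, ht⟩ : ∃ t, t = 1 - sin y / y := ⟨_, rfl⟩
  have hs : sin y = y * (1 - t) := by rw [ht]; field_simp; ring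
  have hle : sin y < y := sin_lt h0
  have hge : y - y ^ 3 / 6 < sin y := sin_gt_sub_cube h0
  have hT := sin_bound (x := y) (by rwa [abs_of_pos h0])
  rw [abs_of_pos h0] at hT
  have hy5 : 0 ≤ y ^ 5 := by positivity
  obtain ⟨hT1, hT2⟩ := abs_le.1 (hT.trans (show y ^ 5 / 100 ≤ y ^ 5 by linarith))
  have ht0 : 0 ≤ t := by nlinarith
  have ht1 : t ≤ y ^ 2 / 4 := by
    by_contra! hc
    nlinarith [mul_lt_mul_of_pos_left hc h0]
  have hy2 : y ^ 2 ≤ 1 := by nlinarith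
  have ha1 : t - y ^ 2 / 6 ≤ y ^ 4 := by
    by_contra! hc
    nlinarith [mul_lt_mul_of_pos_left hc h0]
  have ha2 : -y ^ 4 ≤ t - y ^ 2 / 6 := by
    by_contra! hc
    nlinarith [mul_lt_mul_of_pos_left hc h0]
  have hR := one_sub_rpow_bound hγ0 hγ2 ht0 (by linarith)
  have habs : |sin y / y| = 1 - t := by
    rw [show sin y / y = 1 - t by rw [ht]; ring, abs_of_nonneg (by linarith)]
  rw [habs]
  obtain ⟨R, hRd⟩ : ∃ R, R = (1 - t) ^ γ - (1 - γ * t) := ⟨_, rfl⟩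
  rw [← hRd] at hR
  have htt : t ^ 2 ≤ y ^ 4 / 16 := by nlinarith
  have hR' : |R| ≤ 5 / 8 * y ^ 4 := by linarith
  rw [show (1 - t) ^ γ = 1 - γ * t + R by rw [hRd]; ring, hs]
  exact cancel_quadratic hγ0 hγ2 hy2 ht0 ht1 (abs_le.2 ⟨by linarith, by linarith⟩) hR'

lemma sinc_bound_all {γ y : ℝ} (hγ0 : 0 < γ) (hγ2 : γ < 2) (h0 : 0 < y) :
    |(1 + γ / 6 * sin y ^ 2) * |sin y / y| ^ γ - 1| ≤ 10 * y ^ 4 := by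
  rcases le_total y 1 with h1 | h1
  · exact sinc_bound hγ0 hγ2 h0 h1
  have hs : |sin y / y| ≤ 1 := by
    rw [abs_div, abs_of_pos h0, div_le_one h0]
    exact (abs_sin_le_one y).trans h1
  have hp : |sin y / y| ^ γ ≤ 1 := rpow_le_one (abs_nonneg _) hs hγ0.le
  have hp0 : 0 ≤ |sin y / y| ^ γ := by positivity
  have hq : 1 + γ / 6 * sin y ^ 2 ≤ 2 := by nlinarith [sin_sq_le_one y, sq_nonneg (sin y)]
  have hq0 : 0 ≤ 1 + γ / 6 * sin y ^ 2 := by positivity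
  have hm : (1 + γ / 6 * sin y ^ 2) * |sin y / y| ^ γ ≤ 2 * 1 := by gcongr
  have hm0 : 0 ≤ (1 + γ / 6 * sin y ^ 2) * |sin y / y| ^ γ := by positivity
  have hy : 1 ≤ y ^ 4 := one_le_pow₀ h1
  rw [abs_le]
  constructor <;> linarith

lemma symbol_bound {γ h : ℝ} (hγ0 : 0 < γ) (hγ2 : γ < 2) (hh : 0 < h) (ξ : ℝ) :
    |(-|ξ| ^ γ + ((1 + γ / 12) - γ / 12 * Real.cos (ξ * h)) * h ^ (-γ) *
            |2 * Real.sin (ξ * h / 2)| ^ γ)| ≤ (1 + |ξ|) ^ (γ + 4) * h ^ 4 := by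
  rcases eq_or_ne ξ 0 with rfl | hξ
  · simp [zero_rpow hγ0.ne']
    positivity
  have ha : 0 < |ξ| := abs_pos.2 hξ
  obtain ⟨y, hy⟩ : ∃ y, y = |ξ| * h / 2 := ⟨_, rfl⟩
  have hy0 : 0 < y := by rw [hy]; positivity
  have hcos : cos (ξ * h) = 1 - 2 * sin y ^ 2 := by
    have : cos (ξ * h) = cos (2 * y) := by
      rw [← cos_abs, abs_mul, abs_of_pos hh, hy]
      congr 1
      ring
    rw [this, cos_two_mul, cos_sq']
    ring
  have hsin : |2 * sin (ξ * h / 2)| = h * (|ξ| * |sin y / y|) := by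
    have : |sin (ξ * h / 2)| = |sin y| := by
      rcases abs_cases ξ with ⟨e, _⟩ | ⟨e, _⟩
      · rw [hy, e]
      · rw [hy, e, show -ξ * h / 2 = -(ξ * h / 2) by ring, sin_neg, abs_neg]
    have h2 : h * |ξ| = 2 * y := by rw [hy]; ring
    rw [abs_mul, this, abs_div, abs_of_pos hy0, abs_two, ← mul_assoc, h2]
    field_simp
  rw [hcos, hsin, mul_rpow hh.le (by positivity), mul_rpow ha.le (abs_nonneg _), rpow_neg hh.le]
  have hpos : 0 < h ^ γ := rpow_pos_of_pos hh γ
  have heq : -|ξ| ^ γ + (1 + γ / 12 - γ / 12 * (1 - 2 * sin y ^ 2)) * (h ^ γ)⁻¹ *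
      (h ^ γ * (|ξ| ^ γ * |sin y / y| ^ γ)) =
      |ξ| ^ γ * ((1 + γ / 6 * sin y ^ 2) * |sin y / y| ^ γ - 1) := by
    field_simp
    ring
  rw [heq, abs_mul, abs_of_nonneg (by positivity : 0 ≤ |ξ| ^ γ)]
  calc _ ≤ |ξ| ^ γ * (10 * y ^ 4) := by
        gcongr
        exact sinc_bound_all hγ0 hγ2 hy0
    _ = 10 / 16 * (|ξ| ^ γ * |ξ| ^ 4) * h ^ 4 := by rw [hy]; ring
    _ ≤ 1 * ((1 + |ξ|) ^ γ * (1 + |ξ|) ^ 4) * h ^ 4 := by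
        gcongr <;> norm_num
    _ = _ := by
        rw [one_mul, rpow_add (by positivity)]
        norm_cast

theorem stmt_14 (γ : ℝ) (hγ0 : 0 < γ) (hγ2 : γ < 2) (hγ1 : γ ≠ 1)
    (C₀ : ℝ) (hC₀ : 0 < C₀) (g : ℝ → ℂ) (hg : Measurable g)
    (hgbound : ∀ ξ : ℝ, ‖g ξ‖ ≤ C₀ * (1 + |ξ|) ^ (-(7 : ℝ))) :
    ∃ C' : ℝ, 0 < C' ∧ ∀ h : ℝ, 0 < h → h ≤ 1 →
      Integrable (fun ξ : ℝ =>
        ((-|ξ| ^ γ + ((1 + γ / 12) - γ / 12 * Real.cos (ξ * h)) * h ^ (-γ) *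
            |2 * Real.sin (ξ * h / 2)| ^ γ : ℝ) : ℂ) * g ξ) ∧
      ∫ ξ : ℝ, ‖((-|ξ| ^ γ + ((1 + γ / 12) - γ / 12 * Real.cos (ξ * h)) * h ^ (-γ) *
            |2 * Real.sin (ξ * h / 2)| ^ γ : ℝ) : ℂ) * g ξ‖ ≤ C' * h ^ 4 := by
  have hint : Integrable (fun ξ : ℝ => (1 + |ξ|) ^ (-(3 - γ))) := by
    have := integrable_one_add_norm (E := ℝ) (μ := volume) (r := 3 - γ)
      (by simp; linarith)
    simpa [Real.norm_eq_abs] using this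
  have hI0 : 0 ≤ ∫ ξ : ℝ, (1 + |ξ|) ^ (-(3 - γ)) := integral_nonneg fun ξ => by positivity
  -- The summand `1` only serves to make the constant visibly positive.
  refine ⟨C₀ * (∫ ξ : ℝ, (1 + |ξ|) ^ (-(3 - γ))) + 1, by positivity, fun h hh _ => ?_⟩
  have hpt : ∀ ξ : ℝ, ‖((-|ξ| ^ γ + ((1 + γ / 12) - γ / 12 * Real.cos (ξ * h)) * h ^ (-γ) *
      |2 * Real.sin (ξ * h / 2)| ^ γ : ℝ) : ℂ) * g ξ‖ ≤
      C₀ * h ^ 4 * (1 + |ξ|) ^ (-(3 - γ)) := by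
    intro ξ
    rw [norm_mul, Complex.norm_real, Real.norm_eq_abs]
    calc _ ≤ ((1 + |ξ|) ^ (γ + 4) * h ^ 4) * (C₀ * (1 + |ξ|) ^ (-(7 : ℝ))) :=
          mul_le_mul (symbol_bound hγ0 hγ2 hh ξ) (hgbound ξ) (norm_nonneg _) (by positivity)
      _ = C₀ * h ^ 4 * ((1 + |ξ|) ^ (γ + 4) * (1 + |ξ|) ^ (-(7 : ℝ))) := by ring
      _ = _ := by
          rw [← rpow_add (by positivity)]
          ring_nf
  have hdom := hint.const_mul (C₀ * h ^ 4)
  have hF : Integrable (fun ξ : ℝ =>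
        ((-|ξ| ^ γ + ((1 + γ / 12) - γ / 12 * Real.cos (ξ * h)) * h ^ (-γ) *
            |2 * Real.sin (ξ * h / 2)| ^ γ : ℝ) : ℂ) * g ξ) := by
    refine hdom.mono' (Measurable.aestronglyMeasurable ?_) (Filter.Eventually.of_forall hpt)
    refine Measurable.mul (Complex.measurable_ofReal.comp ?_) hg
    fun_prop
  refine ⟨hF, (integral_mono hF.norm hdom hpt).trans ?_⟩
  rw [integral_const_mul]
  nlinarith [pow_pos hh 4]
end
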